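/- Let α : [m] → [n] be a monotone map, Γ : [m+r] → [m] × [r] a maximal chain, and let (Γ', β) be a pair consisting of a maximal chain Γ' : [n+r] → [n] × [r] and a monotone map β : [m+r] → [n+r] with Γ'(β(k)) = (α((Γ k).fst), (Γ k).snd) for all k ∈ [m+r]. Then β is given by the formula (β(k) : ℕ) = (α((Γ k).fst) : ℕ) + ((Γ k).snd : ℕ) for every k ∈ [m+r]; in particular β(fs_Γ(j)) = α((Γ(fs_Γ(j))).fst) + j for every 1 ≤ j ≤ r. -/

import Mathlib

/-!
The rank function `p ↦ p.1 + p.2` of the grid `[n] × [r]` is strictly monotone with values in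
`[n + r]`, so its composite with a maximal chain `Γ : [n + r] → [n] × [r]` is a strictly monotone
endomap of `[n + r]`, hence the identity: `(Γ k).1 + (Γ k).2 = k`. Applied to `Γ'` at `β k` this is
the formula for `β`. It also shows that the second coordinate of a chain grows by at most one at
each step, so it attains every `j`, and the first `k` at which it is at least `j` attains it
exactly.
-/

open Finset

/-- `fs_Γ(i) = min { j | (Γ j).snd ≥ i }` (defined as `0` if the set is
empty; for maximal chains the set is always nonempty). -/
def fs {p n r : ℕ} (Γ : Fin (p + 1) → Fin (n + 1) × Fin (r + 1))
    (i : Fin (r + 1)) : Fin (p + 1) :=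
  if h : (univ.filter fun j => i ≤ (Γ j).2).Nonempty
  then (univ.filter fun j => i ≤ (Γ j).2).min' h else 0

variable {p n r : ℕ}

/-- The rank function of the graded poset `[n] × [r]`. It takes values in `Fin (n + r + 1)`, rather
than `ℕ`, so that its composite with a maximal chain is an endomap. -/
def gridRank (x : Fin (n + 1) × Fin (r + 1)) : Fin (n + r + 1) :=
  ⟨x.1 + x.2, by omega⟩

lemma gridRank_strictMono : StrictMono (gridRank : Fin (n + 1) × Fin (r + 1) → _) := by
  intro x y hxy
  rw [Prod.lt_iff] at hxy
  simp only [gridRank, Fin.lt_def, Fin.le_def] at hxy ⊢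
  omega

lemma fst_add_snd_of_strictMono {Γ : Fin (n + r + 1) → Fin (n + 1) × Fin (r + 1)}
    (hΓ : StrictMono Γ) (k : Fin (n + r + 1)) : ((Γ k).1 : ℕ) + (Γ k).2 = k :=
  congrArg Fin.val (congrFun (gridRank_strictMono.comp hΓ).eq_id k)

lemma snd_succ_le_of_strictMono {Γ : Fin (n + r + 1) → Fin (n + 1) × Fin (r + 1)}
    (hΓ : StrictMono Γ) (k : Fin (n + r)) : ((Γ k.succ).2 : ℕ) ≤ (Γ k.castSucc).2 + 1 := by
  have hfst : ((Γ k.castSucc).1 : ℕ) ≤ (Γ k.succ).1 := (hΓ.monotone k.castSucc_le_succ).1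
  have hsum := fst_add_snd_of_strictMono hΓ k.castSucc
  have hsum_succ := fst_add_snd_of_strictMono hΓ k.succ
  rw [Fin.val_castSucc] at hsum
  rw [Fin.val_succ] at hsum_succ
  omega

lemma exists_apply_eq_of_succ_le_add_one {f : Fin (p + 1) → ℕ}
    (hf : ∀ k : Fin p, f k.succ ≤ f k.castSucc + 1) {i : ℕ} (hi : f 0 ≤ i) {k : Fin (p + 1)}
    (hk : i ≤ f k) : ∃ l, f l = i := by
  induction k using Fin.induction with
  | zero => exact ⟨0, hi.antisymm hk⟩
  | succ k ih =>
    rcases hk.eq_or_lt with heq | hlt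
    · exact ⟨k.succ, heq.symm⟩
    · exact ih (Nat.lt_succ_iff.1 (hlt.trans_le (hf k)))

lemma snd_surjective_of_strictMono {Γ : Fin (n + r + 1) → Fin (n + 1) × Fin (r + 1)}
    (hΓ : StrictMono Γ) : Function.Surjective fun k => (Γ k).2 := by
  intro i
  have hzero : ((Γ 0).2 : ℕ) ≤ i := by
    have hsum := fst_add_snd_of_strictMono hΓ 0
    rw [Fin.val_zero] at hsum
    omega
  have hlast : (i : ℕ) ≤ (Γ (Fin.last _)).2 := by
    have hsum := fst_add_snd_of_strictMono hΓ (Fin.last _)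
    rw [Fin.val_last] at hsum
    omega
  obtain ⟨k, hk⟩ :=
    exists_apply_eq_of_succ_le_add_one (f := fun k => (Γ k).2) (snd_succ_le_of_strictMono hΓ)
      hzero hlast
  exact ⟨k, Fin.ext hk⟩

lemma isLeast_fs {Γ : Fin (p + 1) → Fin (n + 1) × Fin (r + 1)} {i : Fin (r + 1)}
    (h : {k | i ≤ (Γ k).2}.Nonempty) : IsLeast {k | i ≤ (Γ k).2} (fs Γ i) := by
  have hne : (univ.filter fun k => i ≤ (Γ k).2).Nonempty := by
    rwa [← coe_nonempty, coe_filter_univ]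
  simpa only [fs, dif_pos hne, coe_filter_univ] using isLeast_min' _ hne

lemma snd_apply_fs_eq {Γ : Fin (p + 1) → Fin (n + 1) × Fin (r + 1)}
    (hΓ : Monotone fun k => (Γ k).2) {i : Fin (r + 1)} {k : Fin (p + 1)} (hk : (Γ k).2 = i) :
    (Γ (fs Γ i)).2 = i := by
  have hfs : IsLeast {k | i ≤ (Γ k).2} (fs Γ i) := isLeast_fs ⟨k, hk.ge⟩
  exact ((hΓ (hfs.2 hk.ge)).trans_eq hk).antisymm hfs.1

lemma snd_apply_fs_of_strictMono {Γ : Fin (n + r + 1) → Fin (n + 1) × Fin (r + 1)}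
    (hΓ : StrictMono Γ) (i : Fin (r + 1)) : (Γ (fs Γ i)).2 = i := by
  obtain ⟨k, hk⟩ := snd_surjective_of_strictMono hΓ i
  exact snd_apply_fs_eq (monotone_snd.comp hΓ.monotone) hk

theorem beta_formula_general {m : ℕ} {α : Fin (m + 1) → Fin (n + 1)}
    {Γ : Fin (m + r + 1) → Fin (m + 1) × Fin (r + 1)} (hΓ : StrictMono Γ)
    {Γ' : Fin (n + r + 1) → Fin (n + 1) × Fin (r + 1)} (hΓ' : StrictMono Γ')
    {β : Fin (m + r + 1) → Fin (n + r + 1)} (hcomm : ∀ k, Γ' (β k) = (α (Γ k).1, (Γ k).2)) :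
    (∀ k, (β k : ℕ) = (α (Γ k).1 : ℕ) + ((Γ k).2 : ℕ)) ∧
    ∀ j : Fin (r + 1), (β (fs Γ j) : ℕ) = (α (Γ (fs Γ j)).1 : ℕ) + (j : ℕ) := by
  have hβ (k : Fin (m + r + 1)) : (β k : ℕ) = (α (Γ k).1 : ℕ) + ((Γ k).2 : ℕ) := by
    rw [← fst_add_snd_of_strictMono hΓ' (β k), hcomm]
  refine ⟨hβ, fun j => ?_⟩
  rw [hβ, snd_apply_fs_of_strictMono hΓ]

/-- Let `α : [m] → [n]` be monotone, `Γ : [m+r] → [m] × [r]` a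
maximal chain, and `(Γ', β)` a pair with `Γ' : [n+r] → [n] × [r]` a maximal
chain and `β : [m+r] → [n+r]` monotone such that
`Γ'(β(k)) = (α((Γ k).fst), (Γ k).snd)` for all `k`.  Then
`β(k) = α((Γ k).fst) + (Γ k).snd` (in `ℕ`) for every `k`; in particular
`β(fs_Γ(j)) = α((Γ(fs_Γ(j))).fst) + j` for every `1 ≤ j ≤ r`. -/
theorem beta_formula (n m r : ℕ)
    (α : Fin (m + 1) → Fin (n + 1)) (hαmono : Monotone α)
    (Γ : Fin (m + r + 1) → Fin (m + 1) × Fin (r + 1))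
    (hΓmono : Monotone Γ) (hΓinj : Function.Injective Γ)
    (Γ' : Fin (n + r + 1) → Fin (n + 1) × Fin (r + 1))
    (hΓ'mono : Monotone Γ') (hΓ'inj : Function.Injective Γ')
    (β : Fin (m + r + 1) → Fin (n + r + 1)) (hβmono : Monotone β)
    (hcomm : ∀ k, Γ' (β k) = (α (Γ k).1, (Γ k).2)) :
    (∀ k, (β k : ℕ) = (α (Γ k).1 : ℕ) + ((Γ k).2 : ℕ)) ∧
    ∀ j : Fin (r + 1), 1 ≤ (j : ℕ) →
      (β (fs Γ j) : ℕ) = (α (Γ (fs Γ j)).1 : ℕ) + (j : ℕ) := by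
  obtain ⟨hβ, hβfs⟩ := beta_formula_general (hΓmono.strictMono_of_injective hΓinj)
    (hΓ'mono.strictMono_of_injective hΓ'inj) hcomm
  exact ⟨hβ, fun j _ => hβfs j⟩
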